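/- arXiv:math-ph/0402014 — 3 statements merged into one kernel-verified Lean document; each statement's English description precedes it below -/
import Mathlib

section
/- Let K ≥ 2 be an integer and A,B integers with (A,B) not both ≡ 0 mod K. For every μ ∈ ℂ with Im μ > 0 and every γ ∈ ℂ with θ_{[00]}(γ;μ) ≠ 0, θ_{[AB]}(γ;μ) ≠ 0 and θ_{[AB]}(0;μ) ≠ 0, the function Z_{AB} satisfies the twist properties Z_{AB}(γ+1;μ) = ε^A·Z_{AB}(γ;μ) and Z_{AB}(γ+μ;μ) = ε^B·(Z_{AB}(γ;μ) − w_{AB}(γ;μ)), where ε = exp(2πi/K). -/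
open Complex Filter

/-- Theta function with characteristics `p, q`. -/
noncomputable def Theta (p q : ℝ) (γ μ : ℂ) : ℂ :=
  ∑' m : ℤ, Complex.exp ((Real.pi : ℂ) * Complex.I * μ * ((m : ℂ) + (p : ℂ))^2
    + 2 * (Real.pi : ℂ) * Complex.I * ((m : ℂ) + (p : ℂ)) * (γ + (q : ℂ)))

/-- The Jacobi theta function `θ₁`. -/
noncomputable def theta1 (γ μ : ℂ) : ℂ := -Theta (1/2) (1/2) γ μ

/-- Logarithmic derivative of `θ₁` in the first argument. -/
noncomputable def rho (γ μ : ℂ) : ℂ := deriv (fun z => theta1 z μ) γ / theta1 γ μ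

/-- `θ_{[AB]}`, theta with characteristics `A/K - 1/2`, `1/2 - B/K`. -/
noncomputable def thetaAB (K : ℕ) (A B : ℤ) (γ μ : ℂ) : ℂ :=
  Theta ((A : ℝ)/(K : ℝ) - 1/2) (1/2 - (B : ℝ)/(K : ℝ)) γ μ

/-- The coefficients `w_{AB}` of the elliptic r-matrix. -/
noncomputable def wAB (K : ℕ) (A B : ℤ) (γ μ : ℂ) : ℂ :=
  thetaAB K A B γ μ * deriv (fun z => thetaAB K 0 0 z μ) 0
    / (thetaAB K A B 0 μ * thetaAB K 0 0 γ μ)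

/-- The functions `Z_{AB}`. -/
noncomputable def ZAB (K : ℕ) (A B : ℤ) (γ μ : ℂ) : ℂ :=
  wAB K A B γ μ / (2 * (Real.pi : ℂ) * Complex.I) *
    (deriv (fun z => thetaAB K A B z μ) γ / thetaAB K A B γ μ
      - deriv (fun z => thetaAB K A B z μ) 0 / thetaAB K A B 0 μ)

/-- `ε = exp(2πi/K)`. -/
noncomputable def epsK (K : ℕ) : ℂ := Complex.exp (2 * (Real.pi : ℂ) * Complex.I / (K : ℂ))

/-- The diagonal matrix `F = diag(1, ε, …, ε^{K-1})`. -/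
noncomputable def Fmat (K : ℕ) : Matrix (Fin K) (Fin K) ℂ :=
  Matrix.diagonal (fun i => epsK K ^ (i : ℕ))

/-- The cyclic permutation matrix `H`. -/
def Hmat (K : ℕ) : Matrix (Fin K) (Fin K) ℂ :=
  Matrix.of fun i j => if (j : ℕ) = ((i : ℕ) + 1) % K then 1 else 0

/-- `σ_{AB} = H^A F^B` (indices taken mod `K`, using `H^K = F^K = 1`). -/
noncomputable def sigmaAB (K : ℕ) (A B : ℤ) : Matrix (Fin K) (Fin K) ℂ :=
  Hmat K ^ ((A % (K : ℤ)).toNat) * Fmat K ^ ((B % (K : ℤ)).toNat)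

/-- The dual basis `σ^{AB} = (ε^{-AB}/K)·σ_{-A,-B}`. -/
noncomputable def sigmaDualAB (K : ℕ) (A B : ℤ) : Matrix (Fin K) (Fin K) ℂ :=
  (epsK K ^ (-(A * B)) / (K : ℂ)) • sigmaAB K (-A) (-B)

open Kronecker in
/-- The elliptic r-matrix. -/
noncomputable def rmat (K : ℕ) (γ μ : ℂ) : Matrix (Fin K × Fin K) (Fin K × Fin K) ℂ :=
  ∑ A ∈ Finset.range K, ∑ B ∈ Finset.range K,
    if A = 0 ∧ B = 0 then 0
    else wAB K A B γ μ • (sigmaAB K A B ⊗ₖ sigmaDualAB K A B)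


theorem Theta_add_one (p q : ℝ) (γ μ : ℂ) :
    Theta p q (γ + 1) μ = Complex.exp (2 * (Real.pi : ℂ) * Complex.I * p) * Theta p q γ μ := by
  unfold Theta
  rw [← tsum_mul_left]
  refine tsum_congr fun m => ?_
  rw [← Complex.exp_add, Complex.exp_eq_exp_iff_exists_int]
  exact ⟨m, by ring⟩

theorem Theta_add_mu (p q : ℝ) (γ μ : ℂ) :
    Theta p q (γ + μ) μ = Complex.exp (-(Real.pi : ℂ) * Complex.I * μ
      - 2 * (Real.pi : ℂ) * Complex.I * (γ + q)) * Theta p q γ μ := by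
  unfold Theta
  rw [← tsum_mul_left, ← (Equiv.addRight (1 : ℤ)).tsum_eq (fun m : ℤ => _ * _)]
  refine tsum_congr fun m => ?_
  rw [← Complex.exp_add]
  congr 1
  simp only [Equiv.coe_addRight]
  push_cast
  ring

theorem Theta_eq_jacobi (p q : ℝ) (γ μ : ℂ) :
    Theta p q γ μ = Complex.exp ((Real.pi : ℂ) * Complex.I * μ * p ^ 2
      + 2 * (Real.pi : ℂ) * Complex.I * p * (γ + q)) * jacobiTheta₂ (γ + q + p * μ) μ := by
  unfold Theta jacobiTheta₂ jacobiTheta₂_term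
  rw [← tsum_mul_left]
  refine tsum_congr fun m => ?_
  rw [← Complex.exp_add]
  congr 1
  ring

theorem Theta_diff (p q : ℝ) (μ : ℂ) (hμ : 0 < μ.im) :
    Differentiable ℂ (fun z => Theta p q z μ) := by
  simp_rw [Theta_eq_jacobi]
  intro z
  refine DifferentiableAt.mul (by fun_prop) ?_
  exact (differentiableAt_jacobiTheta₂_fst (z + q + p * μ) hμ).comp z
    (f := fun z : ℂ => z + q + p * μ) (by fun_prop)

theorem Theta_deriv_add_one (p q : ℝ) (γ μ : ℂ) :
    deriv (fun z => Theta p q z μ) (γ + 1)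
      = Complex.exp (2 * (Real.pi : ℂ) * Complex.I * p) * deriv (fun z => Theta p q z μ) γ := by
  rw [← deriv_comp_add_const (fun z => Theta p q z μ) 1 γ]
  simp_rw [Theta_add_one]
  rw [deriv_const_mul_field]

theorem Theta_deriv_add_mu (p q : ℝ) (γ μ : ℂ) (hμ : 0 < μ.im) :
    deriv (fun z => Theta p q z μ) (γ + μ)
      = Complex.exp (-(Real.pi : ℂ) * Complex.I * μ
      - 2 * (Real.pi : ℂ) * Complex.I * (γ + q)) * (deriv (fun z => Theta p q z μ) γ
        - 2 * (Real.pi : ℂ) * Complex.I * Theta p q γ μ) := by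
  rw [← deriv_comp_add_const (fun z => Theta p q z μ) μ γ]
  simp_rw [Theta_add_mu]
  have h1 : HasDerivAt (fun z : ℂ => -(Real.pi : ℂ) * Complex.I * μ
      - 2 * (Real.pi : ℂ) * Complex.I * (z + q)) (-(2 * (Real.pi : ℂ) * Complex.I * 1)) γ :=
    (((hasDerivAt_id γ).add_const (q : ℂ)).const_mul _).const_sub _
  have h2 := (Theta_diff p q μ hμ γ).hasDerivAt
  refine (h1.cexp.mul h2).deriv.trans ?_
  ring

theorem epsK_zpow (K : ℕ) (A : ℤ) :
    epsK K ^ A = Complex.exp (2 * (Real.pi : ℂ) * Complex.I * (A / K)) := by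
  unfold epsK
  rw [← Complex.exp_int_mul]
  congr 1
  ring

/-- twist properties of `Z_{AB}`:
`Z_{AB}(γ+1) = ε^A·Z_{AB}(γ)` and `Z_{AB}(γ+μ) = ε^B·(Z_{AB}(γ) − w_{AB}(γ))`. -/
theorem ZAB_twists (K : ℕ) (hK : 2 ≤ K) (A B : ℤ)
    (hAB : ¬(A % (K : ℤ) = 0 ∧ B % (K : ℤ) = 0)) (μ γ : ℂ) (hμ : 0 < μ.im)
    (h00 : thetaAB K 0 0 γ μ ≠ 0) (hγ : thetaAB K A B γ μ ≠ 0)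
    (h0 : thetaAB K A B 0 μ ≠ 0) :
    ZAB K A B (γ + 1) μ = epsK K ^ A * ZAB K A B γ μ ∧
    ZAB K A B (γ + μ) μ = epsK K ^ B * (ZAB K A B γ μ - wAB K A B γ μ) := by
  have hpi : (2 * (Real.pi : ℂ) * Complex.I) ≠ 0 := Complex.two_pi_I_ne_zero
  constructor
  · have hw : wAB K A B (γ + 1) μ = epsK K ^ A * wAB K A B γ μ := by
      have e : Complex.exp (2 * (Real.pi : ℂ) * Complex.I * (((A : ℝ) / (K : ℝ) - 1 / 2 : ℝ) : ℂ))
          = epsK K ^ A * Complex.exp (2 * (Real.pi : ℂ) * Complex.I *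
            ((((0 : ℤ) : ℝ) / (K : ℝ) - 1 / 2 : ℝ) : ℂ)) := by
        rw [epsK_zpow, ← Complex.exp_add]
        congr 1
        push_cast
        ring
      unfold wAB
      unfold thetaAB at *
      rw [Theta_add_one, Theta_add_one, e]
      have := Complex.exp_ne_zero (2 * (Real.pi : ℂ) * Complex.I *
            ((((0 : ℤ) : ℝ) / (K : ℝ) - 1 / 2 : ℝ) : ℂ))
      generalize Complex.exp (2 * (Real.pi : ℂ) * Complex.I *
            ((((0 : ℤ) : ℝ) / (K : ℝ) - 1 / 2 : ℝ) : ℂ)) = c at *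
      field_simp
    unfold ZAB
    rw [hw]
    unfold thetaAB
    rw [Theta_deriv_add_one, Theta_add_one, mul_div_mul_left _ _ (Complex.exp_ne_zero _)]
    ring
  · have hw : wAB K A B (γ + μ) μ = epsK K ^ B * wAB K A B γ μ := by
      have e : Complex.exp (-(Real.pi : ℂ) * Complex.I * μ
          - 2 * (Real.pi : ℂ) * Complex.I * (γ + ((1 / 2 - (B : ℝ) / (K : ℝ) : ℝ) : ℂ)))
          = epsK K ^ B * Complex.exp (-(Real.pi : ℂ) * Complex.I * μ
          - 2 * (Real.pi : ℂ) * Complex.I * (γ + ((1 / 2 - ((0 : ℤ) : ℝ) / (K : ℝ) : ℝ) : ℂ))) := by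
        rw [epsK_zpow, ← Complex.exp_add]
        congr 1
        push_cast
        ring
      unfold wAB
      unfold thetaAB at *
      rw [Theta_add_mu, Theta_add_mu, e]
      have := Complex.exp_ne_zero (-(Real.pi : ℂ) * Complex.I * μ
          - 2 * (Real.pi : ℂ) * Complex.I * (γ + ((1 / 2 - ((0 : ℤ) : ℝ) / (K : ℝ) : ℝ) : ℂ)))
      generalize Complex.exp (-(Real.pi : ℂ) * Complex.I * μ
          - 2 * (Real.pi : ℂ) * Complex.I *
            (γ + ((1 / 2 - ((0 : ℤ) : ℝ) / (K : ℝ) : ℝ) : ℂ))) = c at *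
      field_simp
    unfold ZAB
    rw [hw]
    unfold thetaAB at *
    rw [Theta_deriv_add_mu _ _ _ _ hμ, Theta_add_mu, mul_div_mul_left _ _ (Complex.exp_ne_zero _),
      sub_div, mul_div_cancel_right₀ _ hγ]
    have : wAB K A B γ μ = wAB K A B γ μ / (2 * (Real.pi : ℂ) * Complex.I)
        * (2 * (Real.pi : ℂ) * Complex.I) := by rw [div_mul_cancel₀ _ hpi]
    linear_combination (epsK K ^ B) * this
end

section
/- Let K ≥ 2 be an integer, μ ∈ ℂ with Im μ > 0, and γ ∈ ℂ such that θ_{[00]}(γ;μ) ≠ 0 and θ_{[AB]}(0;μ) ≠ 0 for all 0 ≤ A,B ≤ K−1 with (A,B) ≠ (0,0). Then the γ-derivative of the elliptic r-matrix is symmetric under simultaneous exchange of tensor factors and sign change of the argument: ∑_{0≤A,B≤K−1,(A,B)≠(0,0)} (∂_γw_{AB})(γ;μ)·(σ_{AB} ⊗ σ^{AB}) = ∑_{0≤A,B≤K−1,(A,B)≠(0,0)} (∂_γw_{AB})(−γ;μ)·(σ^{AB} ⊗ σ_{AB}), i.e. r'^{12}(γ) = r'^{21}(−γ). -/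
open Complex Filter

theorem Theta_neg (p q p' q' : ℝ) (n k : ℤ) (hp : p + p' = n) (hq : q + q' = k) (γ μ : ℂ) :
    Theta p q (-γ) μ
      = Complex.exp (-(2 * (Real.pi : ℂ) * Complex.I * p' * k)) * Theta p' q' γ μ := by
  have hpc : (p : ℂ) = n - p' := by
    have : p = n - p' := by linarith
    rw [this]; push_cast; ring
  have hqc : (q : ℂ) = k - q' := by
    have : q = k - q' := by linarith
    rw [this]; push_cast; ring
  unfold Theta
  rw [← tsum_mul_left, ← (Equiv.subLeft (-n : ℤ)).tsum_eq]
  refine tsum_congr fun m => ?_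
  rw [← Complex.exp_add, Complex.exp_eq_exp_iff_exists_int]
  refine ⟨-(m * k), ?_⟩
  rw [hpc, hqc]
  simp only [Equiv.subLeft_apply]
  push_cast
  ring

theorem thetaAB_neg (K : ℕ) (hK : 2 ≤ K) (A B A' B' a b : ℤ) (hA : A + A' = a * K)
    (hB : B + B' = b * K) (μ : ℂ) :
    ∃ c : ℂ, c ≠ 0 ∧ ∀ γ, thetaAB K A B (-γ) μ = c * thetaAB K A' B' γ μ := by
  have hK0 : (K : ℝ) ≠ 0 := by positivity
  have hA' : (A : ℝ) + A' = a * K := by exact_mod_cast hA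
  have hB' : (B : ℝ) + B' = b * K := by exact_mod_cast hB
  refine ⟨_, Complex.exp_ne_zero _, fun γ => Theta_neg _ _ _ _ (a - 1) (1 - b) ?_ ?_ γ μ⟩
  · have : (A : ℝ) = a * K - A' := by linarith
    rw [this]; push_cast; field_simp; ring
  · have : (B : ℝ) = b * K - B' := by linarith
    rw [this]; push_cast; field_simp; ring

theorem thetaAB_zero_neg (K : ℕ) (γ μ : ℂ) : thetaAB K 0 0 (-γ) μ = -thetaAB K 0 0 γ μ := by
  unfold thetaAB
  rw [Theta_neg _ _ (((0 : ℤ) : ℝ) / K - 1 / 2) (1 / 2 - ((0 : ℤ) : ℝ) / K) (-1) 1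
    (by norm_num) (by norm_num)]
  have : -(2 * (Real.pi : ℂ) * Complex.I * ((((0 : ℤ) : ℝ) / K - 1 / 2 : ℝ) : ℂ) * ((1 : ℤ) : ℂ))
      = Real.pi * Complex.I := by
    push_cast; ring
  rw [this, Complex.exp_pi_mul_I]; ring

theorem wAB_neg (K : ℕ) (hK : 2 ≤ K) (A B A' B' a b : ℤ) (hA : A + A' = a * K)
    (hB : B + B' = b * K) (γ μ : ℂ) : wAB K A B (-γ) μ = -wAB K A' B' γ μ := by
  obtain ⟨c, hc, h⟩ := thetaAB_neg K hK A B A' B' a b hA hB μ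
  have h0 := h 0
  rw [neg_zero] at h0
  unfold wAB
  rw [h γ, h0, thetaAB_zero_neg, mul_assoc c, mul_assoc c, mul_div_mul_left _ _ hc, mul_neg,
    div_neg]

theorem deriv_wAB_neg (K : ℕ) (hK : 2 ≤ K) (A B A' B' a b : ℤ) (hA : A + A' = a * K)
    (hB : B + B' = b * K) (γ μ : ℂ) :
    deriv (fun z => wAB K A' B' z μ) (-γ) = deriv (fun z => wAB K A B z μ) γ := by
  have h : (fun z => wAB K A B z μ) = fun z => -(fun z => wAB K A' B' z μ) (-z) := by
    funext z
    have := wAB_neg K hK A B A' B' a b hA hB (-z) μ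
    simpa using this
  rw [h, deriv.fun_neg, deriv_comp_neg (fun z => wAB K A' B' z μ), neg_neg]

theorem sigmaAB_congr (K : ℕ) (A B A' B' a b : ℤ) (hA : A = A' + a * K) (hB : B = B' + b * K) :
    sigmaAB K A B = sigmaAB K A' B' := by
  unfold sigmaAB
  rw [hA, hB, Int.add_mul_emod_self_right, Int.add_mul_emod_self_right]

theorem epsK_zpow_congr (K : ℕ) (hK : 2 ≤ K) (x y z : ℤ) (h : x = y + z * K) :
    epsK K ^ x = epsK K ^ y := by
  have hK0 : (K : ℂ) ≠ 0 := by
    have : K ≠ 0 := by omega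
    exact_mod_cast this
  have h1 : epsK K ^ (K : ℤ) = 1 := by
    rw [zpow_natCast, epsK, ← Complex.exp_nat_mul, mul_div_cancel₀ _ hK0, Complex.exp_two_pi_mul_I]
  have hne : epsK K ≠ 0 := Complex.exp_ne_zero _
  rw [h, zpow_add₀ hne, mul_comm z, zpow_mul, h1, one_zpow, mul_one]

open Kronecker in
theorem kron_swap (K : ℕ) (hK : 2 ≤ K) (A B A' B' a b : ℤ) (hA : A + A' = a * K)
    (hB : B + B' = b * K) :
    sigmaDualAB K A' B' ⊗ₖ sigmaAB K A' B' = sigmaAB K A B ⊗ₖ sigmaDualAB K A B := by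
  unfold sigmaDualAB
  rw [Matrix.smul_kronecker, Matrix.kronecker_smul,
    sigmaAB_congr K (-A') (-B') A B (-a) (-b) (by linarith) (by linarith),
    sigmaAB_congr K A' B' (-A) (-B) a b (by linarith) (by linarith),
    epsK_zpow_congr K hK (-(A' * B')) (-(A * B)) (-(a * b * K) + a * B + b * A) ?_]
  have e1 : A' = a * K - A := by linarith
  have e2 : B' = b * K - B := by linarith
  rw [e1, e2]; ring

open Kronecker in
/-- symmetry of the derivative of the elliptic r-matrix:
`r'^{12}(γ) = r'^{21}(−γ)`. -/
theorem rmat_deriv_symmetry (K : ℕ) (hK : 2 ≤ K) (μ γ : ℂ) (hμ : 0 < μ.im)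
    (h00 : thetaAB K 0 0 γ μ ≠ 0)
    (h0 : ∀ A B : ℕ, A < K → B < K → ¬(A = 0 ∧ B = 0) → thetaAB K A B 0 μ ≠ 0) :
    (∑ A ∈ Finset.range K, ∑ B ∈ Finset.range K,
        if A = 0 ∧ B = 0 then 0
        else (deriv (fun z => wAB K A B z μ) γ) • (sigmaAB K A B ⊗ₖ sigmaDualAB K A B))
      = ∑ A ∈ Finset.range K, ∑ B ∈ Finset.range K,
          if A = 0 ∧ B = 0 then 0
          else (deriv (fun z => wAB K A B z μ) (-γ)) • (sigmaDualAB K A B ⊗ₖ sigmaAB K A B) := by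
  let f : ℕ → ℕ := fun i => if i = 0 then 0 else K - i
  have hf : ∀ i ∈ Finset.range K, f i ∈ Finset.range K := by
    intro i hi
    simp only [Finset.mem_range, f] at *
    split_ifs <;> omega
  have hff : ∀ i ∈ Finset.range K, f (f i) = i := by
    intro i hi
    simp only [Finset.mem_range, f] at *
    split_ifs <;> omega
  have hf0 : ∀ i ∈ Finset.range K, (f i = 0 ↔ i = 0) := by
    intro i hi
    simp only [Finset.mem_range, f] at *
    split_ifs <;> omega
  have hfa : ∀ i ∈ Finset.range K, ∃ a : ℤ, (i : ℤ) + (f i : ℕ) = a * K := by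
    intro i hi
    simp only [Finset.mem_range, f] at *
    split_ifs with h
    · exact ⟨0, by simp [h]⟩
    · exact ⟨1, by omega⟩
  refine Finset.sum_nbij' f f hf hf hff hff fun A hA => ?_
  refine Finset.sum_nbij' f f hf hf hff hff fun B hB => ?_
  obtain ⟨a, ha⟩ := hfa A hA
  obtain ⟨b, hb⟩ := hfa B hB
  simp only [hf0 A hA, hf0 B hB]
  rw [deriv_wAB_neg K hK A B (f A) (f B) a b ha hb, kron_swap K hK A B (f A) (f B) a b ha hb]
end

section
/- Let K ≥ 2 be an integer and A,B integers with (A,B) not both ≡ 0 mod K, and let μ ∈ ℂ with Im μ > 0. For every γ ∈ ℂ such that θ_{[00]}(γ;μ) ≠ 0, θ_{[00]}(2γ;μ) ≠ 0, θ₁(γ;μ) ≠ 0, θ_{[AB]}(2γ;μ) ≠ 0 and θ_{[AB]}(0;μ) ≠ 0, the duplication identity 2·w_{AB}(2γ;μ)·ρ(γ;μ) = w_{AB}(γ;μ)² + 2πi·Z_{AB}(2γ;μ) holds. -/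
open Complex Filter

/-- Odd theta function. -/
noncomputable def auxT (μ z : ℂ) : ℂ := Theta (-1/2) (1/2) z μ

noncomputable def auxt (μ z : ℂ) (m : ℤ) : ℂ :=
  Complex.exp ((Real.pi : ℂ) * Complex.I * μ * ((m : ℂ) - 1/2)^2
    + 2 * (Real.pi : ℂ) * Complex.I * ((m : ℂ) - 1/2) * (z + 1/2))

noncomputable def auxf (μ z : ℂ) : ℂ := jacobiTheta₂ (2*z) (2*μ)
noncomputable def auxg (μ z : ℂ) : ℂ :=
  Complex.exp ((Real.pi : ℂ) * Complex.I * μ / 2 + 2 * (Real.pi : ℂ) * Complex.I * z) *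
    jacobiTheta₂ (2*z+μ) (2*μ)

lemma auxT_eq_tsum (μ z : ℂ) : auxT μ z = ∑' m, auxt μ z m := by
  unfold auxT Theta auxt
  congr 1; ext m; congr 1; push_cast; ring

lemma auxt_eq (μ z : ℂ) (m : ℤ) : auxt μ z m =
    Complex.exp ((Real.pi : ℂ) * Complex.I * μ / 4 - (Real.pi : ℂ) * Complex.I * (z+1/2)) *
      jacobiTheta₂_term m (z + 1/2 - μ/2) μ := by
  unfold auxt jacobiTheta₂_term
  rw [← Complex.exp_add]; congr 1; ring

lemma auxt_summable (μ z : ℂ) (hμ : 0 < μ.im) : Summable (auxt μ z) := by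
  simp_rw [funext (auxt_eq μ z)]
  exact (hasSum_jacobiTheta₂_term _ hμ).summable.mul_left _

lemma auxT_eq (μ z : ℂ) : auxT μ z =
    Complex.exp ((Real.pi : ℂ) * Complex.I * μ / 4 - (Real.pi : ℂ) * Complex.I * (z+1/2)) *
      jacobiTheta₂ (z + 1/2 - μ/2) μ := by
  rw [auxT_eq_tsum]
  simp_rw [auxt_eq]
  rw [tsum_mul_left]; rfl

lemma auxT_diff (μ : ℂ) (hμ : 0 < μ.im) : Differentiable ℂ (auxT μ) := by
  intro z
  rw [funext (auxT_eq μ)]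
  have h := (differentiableAt_jacobiTheta₂_fst (z + 1/2 - μ/2) hμ)
  have h' : DifferentiableAt ℂ (fun z : ℂ => jacobiTheta₂ (z + 1/2 - μ/2) μ) z :=
    DifferentiableAt.comp z (g := fun w => jacobiTheta₂ w μ) h (by fun_prop)
  fun_prop

lemma auxf_diff (μ : ℂ) (hμ : 0 < μ.im) : Differentiable ℂ (auxf μ) := by
  intro z
  have h := (differentiableAt_jacobiTheta₂_fst (2*z) (τ := 2*μ) (by simpa using hμ))
  exact DifferentiableAt.comp z (g := fun w => jacobiTheta₂ w (2*μ)) h (by fun_prop)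

lemma auxg_diff (μ : ℂ) (hμ : 0 < μ.im) : Differentiable ℂ (auxg μ) := by
  intro z
  have h := (differentiableAt_jacobiTheta₂_fst (2*z+μ) (τ := 2*μ) (by simpa using hμ))
  have h' : DifferentiableAt ℂ (fun z : ℂ => jacobiTheta₂ (2*z+μ) (2*μ)) z :=
    DifferentiableAt.comp z (g := fun w => jacobiTheta₂ w (2*μ)) h (by fun_prop)
  unfold auxg
  fun_prop

noncomputable def auxft (μ z : ℂ) (j : ℤ) : ℂ :=
  Complex.exp ((Real.pi : ℂ) * Complex.I * μ * (2*j)^2/2 + 2 * (Real.pi : ℂ) * Complex.I * (2*j) * z)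
noncomputable def auxgt (μ z : ℂ) (j : ℤ) : ℂ :=
  Complex.exp ((Real.pi : ℂ) * Complex.I * μ * (2*j+1)^2/2
    + 2 * (Real.pi : ℂ) * Complex.I * (2*j+1) * z)

lemma auxf_hasSum (μ z : ℂ) (hμ : 0 < μ.im) : HasSum (auxft μ z) (auxf μ z) := by
  have h := hasSum_jacobiTheta₂_term (2*z) (τ := 2*μ) (by simpa using hμ)
  have e : auxft μ z = fun n => jacobiTheta₂_term n (2*z) (2*μ) := by
    ext j
    unfold auxft jacobiTheta₂_term
    congr 1; ring
  rw [e]; exact h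

lemma auxg_hasSum (μ z : ℂ) (hμ : 0 < μ.im) : HasSum (auxgt μ z) (auxg μ z) := by
  have h := (hasSum_jacobiTheta₂_term (2*z+μ) (τ := 2*μ) (by simpa using hμ)).mul_left
    (Complex.exp ((Real.pi : ℂ) * Complex.I * μ / 2 + 2 * (Real.pi : ℂ) * Complex.I * z))
  have e : auxgt μ z = fun n =>
      Complex.exp ((Real.pi : ℂ) * Complex.I * μ / 2 + 2 * (Real.pi : ℂ) * Complex.I * z) *
        jacobiTheta₂_term n (2*z+μ) (2*μ) := by
    ext j
    unfold auxgt jacobiTheta₂_term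
    rw [← Complex.exp_add]
    congr 1; ring
  rw [e]; exact h

lemma aux_prod {f g : ℤ → ℂ} {a b : ℂ} (hf : HasSum f a) (hg : HasSum g b) :
    HasSum (fun p : ℤ × ℤ => f p.1 * g p.2) (a * b) :=
  hf.mul hg (summable_mul_of_summable_norm hf.summable.norm hg.summable.norm)

def auxi1 (p : ℤ × ℤ) : ℤ × ℤ := (p.1 + p.2 + 1, p.1 - p.2)
def auxi2 (p : ℤ × ℤ) : ℤ × ℤ := (p.1 + p.2 + 1, p.1 - p.2 + 1)

lemma auxi1_inj : Function.Injective auxi1 := by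
  rintro ⟨a, b⟩ ⟨c, d⟩ h
  simp only [auxi1, Prod.mk.injEq] at h ⊢
  omega

lemma auxi2_inj : Function.Injective auxi2 := by
  rintro ⟨a, b⟩ ⟨c, d⟩ h
  simp only [auxi2, Prod.mk.injEq] at h ⊢
  omega

lemma auxi_compl : IsCompl (Set.range auxi1) (Set.range auxi2) := by
  constructor
  · rw [Set.disjoint_left]
    rintro _ ⟨⟨a, b⟩, rfl⟩ ⟨⟨c, d⟩, h⟩
    simp only [auxi1, auxi2, Prod.mk.injEq] at h
    omega
  · rw [codisjoint_iff_le_sup]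
    rintro ⟨m, n⟩ -
    rcases Int.even_or_odd' (m - n) with ⟨k, h | h⟩
    · right
      exact ⟨(m - 1 - k, k), by simp only [auxi2, Prod.mk.injEq]; omega⟩
    · left
      exact ⟨(m - 1 - k, k), by simp only [auxi1, Prod.mk.injEq]; omega⟩

lemma aux_exp_int (x : ℂ) (n : ℤ) : Complex.exp (x + n * (2 * Real.pi * Complex.I)) = Complex.exp x := by
  rw [Complex.exp_add, Complex.exp_int_mul_two_pi_mul_I, mul_one]

lemma auxW (μ : ℂ) (hμ : 0 < μ.im) (x y : ℂ) :
    auxT μ (x + y) * auxT μ (x - y) = auxf μ x * auxg μ y - auxg μ x * auxf μ y := by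
  have hT : ∀ z, HasSum (auxt μ z) (auxT μ z) := fun z => by
    rw [auxT_eq_tsum]; exact (auxt_summable μ z hμ).hasSum
  have h := aux_prod (hT (x+y)) (hT (x-y))
  have h1 := aux_prod (auxf_hasSum μ x hμ) (auxg_hasSum μ y hμ)
  have h2 := (aux_prod (auxg_hasSum μ x hμ) (auxf_hasSum μ y hμ)).neg
  obtain ⟨F, hF⟩ : ∃ F : ℤ × ℤ → ℂ, F = fun p => auxt μ (x+y) p.1 * auxt μ (x-y) p.2 := ⟨_, rfl⟩
  rw [← hF] at h
  have e1 : (fun p : ℤ × ℤ => auxft μ x p.1 * auxgt μ y p.2) = F ∘ auxi1 := by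
    ext ⟨j, k⟩
    simp only [hF, Function.comp, auxi1, auxt, auxft, auxgt]
    rw [← Complex.exp_add, ← Complex.exp_add, ← aux_exp_int _ j]
    congr 1; push_cast; ring
  have e2 : (fun p : ℤ × ℤ => -(auxgt μ x p.1 * auxft μ y p.2)) = F ∘ auxi2 := by
    ext ⟨j, k⟩
    simp only [hF, Function.comp, auxi2, auxt, auxft, auxgt]
    rw [← Complex.exp_add, ← Complex.exp_add, ← aux_exp_int _ j, neg_eq_neg_one_mul,
      ← Complex.exp_pi_mul_I, ← Complex.exp_add]
    congr 1; push_cast; ring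
  rw [e1] at h1
  rw [e2] at h2
  have h3 := (auxi1_inj.hasSum_range_iff (f := F)).2 h1
  have h4 := (auxi2_inj.hasSum_range_iff (f := F)).2 h2
  have h5 := HasSum.add_isCompl (f := F) auxi_compl h3 h4
  rw [h.unique h5]; ring

/-- Differentiated three-term identity. -/
lemma aux_key (μ : ℂ) (hμ : 0 < μ.im) (γ u : ℂ) (hγ : auxT μ γ ≠ 0) :
    deriv (auxT μ) 0 * auxT μ (2*γ) * auxT μ (γ+u)^2 =
      2 * auxT μ (2*γ+u) * auxT μ u * deriv (auxT μ) γ * auxT μ γ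
      - auxT μ γ ^2 * (deriv (auxT μ) (2*γ+u) * auxT μ u - auxT μ (2*γ+u) * deriv (auxT μ) u) := by
  have odd : ∀ s, auxT μ (-s) = - auxT μ s := by
    intro s
    have a1 := auxW μ hμ ((γ+s)/2) ((γ-s)/2)
    have a2 := auxW μ hμ ((γ-s)/2) ((γ+s)/2)
    rw [show (γ+s)/2 + (γ-s)/2 = γ by ring, show (γ+s)/2 - (γ-s)/2 = s by ring] at a1
    rw [show (γ-s)/2 + (γ+s)/2 = γ by ring, show (γ-s)/2 - (γ+s)/2 = -s by ring] at a2
    apply mul_left_cancel₀ hγ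
    linear_combination a1 + a2
  have dT : ∀ z, HasDerivAt (auxT μ) (deriv (auxT μ) z) z := fun z => (auxT_diff μ hμ z).hasDerivAt
  have dodd : deriv (auxT μ) (-u) = deriv (auxT μ) u := by
    have b1 : HasDerivAt (fun s => auxT μ (-s)) (-deriv (auxT μ) (-u)) u := by
      have b0 := (dT (-u)).comp u (hasDerivAt_neg u)
      rw [mul_neg_one] at b0
      exact b0
    have b2 : HasDerivAt (fun s => auxT μ (-s)) (-deriv (auxT μ) u) u := by
      rw [funext odd]; exact (dT u).neg
    exact neg_injective (b1.unique b2)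
  have T0 : auxT μ 0 = 0 := by
    have := odd 0
    rw [neg_zero] at this
    linear_combination this/2
  have dW : ∀ y, deriv (auxT μ) (γ+y) * auxT μ (γ-y) + auxT μ (γ+y) * deriv (auxT μ) (γ-y)
      = deriv (auxf μ) γ * auxg μ y - deriv (auxg μ) γ * auxf μ y := by
    intro y
    have b1 : HasDerivAt (fun x => auxT μ (x+y) * auxT μ (x-y))
        (deriv (auxT μ) (γ+y) * auxT μ (γ-y) + auxT μ (γ+y) * deriv (auxT μ) (γ-y)) γ :=
      ((dT (γ+y)).comp_add_const γ y).mul ((dT (γ-y)).comp_sub_const γ y)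
    have b2 : HasDerivAt (fun x => auxf μ x * auxg μ y - auxg μ x * auxf μ y)
        (deriv (auxf μ) γ * auxg μ y - deriv (auxg μ) γ * auxf μ y) γ :=
      ((auxf_diff μ hμ γ).hasDerivAt.mul_const _).sub ((auxg_diff μ hμ γ).hasDerivAt.mul_const _)
    rw [funext (fun x => auxW μ hμ x y)] at b1
    exact b1.unique b2
  have c1 := dW γ
  have c2 := dW 0
  have c3 := dW (γ+u)
  have w1 := auxW μ hμ γ 0
  have w2 := auxW μ hμ γ (γ+u)
  have w3 := auxW μ hμ (γ+u) 0
  rw [sub_self, T0, ← two_mul] at c1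
  rw [add_zero, sub_zero] at c2 w1 w3
  rw [show γ + (γ+u) = 2*γ+u by ring, show γ - (γ+u) = -u by ring, odd] at c3 w2
  rw [dodd] at c3
  have hc : deriv (auxT μ) 0 * auxT μ (2*γ) =
    deriv (auxf μ) γ * auxg μ γ - deriv (auxg μ) γ * auxf μ γ := by linear_combination c1
  have q3 : auxT μ (γ+u)^2 = auxf μ (γ+u) * auxg μ 0 - auxg μ (γ+u) * auxf μ 0 := by
    rw [← w3]; ring
  have q1 : auxT μ γ^2 = auxf μ γ * auxg μ 0 - auxg μ γ * auxf μ 0 := by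
    rw [← w1]; ring
  have r1 : 2 * auxT μ (2*γ+u) * auxT μ u * deriv (auxT μ) γ * auxT μ γ =
    -(auxT μ (2*γ+u) * -auxT μ u) * (deriv (auxT μ) γ * auxT μ γ + auxT μ γ * deriv (auxT μ) γ) := by
    ring
  have r2 : deriv (auxT μ) (2*γ+u) * auxT μ u - auxT μ (2*γ+u) * deriv (auxT μ) u =
    -(deriv (auxT μ) (2*γ+u) * -auxT μ u + auxT μ (2*γ+u) * deriv (auxT μ) u) := by ring
  rw [hc, q3, r1, r2, c2, c3, w2, q1]
  ring

lemma thetaAB_zero (K : ℕ) (z μ : ℂ) : thetaAB K 0 0 z μ = auxT μ z := by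
  unfold thetaAB auxT
  norm_num

lemma theta1_eq (z μ : ℂ) : theta1 z μ = - auxT μ z := by
  unfold theta1 auxT Theta
  rw [neg_inj, ← (Equiv.addRight (-1:ℤ)).tsum_eq]
  congr 1; ext m; simp only [Equiv.coe_addRight]; congr 1; push_cast; ring

lemma thetaAB_eq (K : ℕ) (A B : ℤ) (μ : ℂ) : ∃ C a u : ℂ, C ≠ 0 ∧
    ∀ z, thetaAB K A B z μ = C * Complex.exp (a * z) * auxT μ (z + u) := by
  refine ⟨Complex.exp ((Real.pi : ℂ) * Complex.I * μ * ((A:ℂ)/K)^2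
    + 2 * (Real.pi : ℂ) * Complex.I * ((A:ℂ)/K) * (1/2 - (B:ℂ)/K)),
    2 * (Real.pi : ℂ) * Complex.I * ((A:ℂ)/K), (A:ℂ)/K * μ - (B:ℂ)/K, Complex.exp_ne_zero _, ?_⟩
  intro z
  rw [auxT_eq_tsum, ← tsum_mul_left]
  unfold thetaAB Theta auxt
  congr 1; ext m
  rw [← Complex.exp_add, ← Complex.exp_add]
  congr 1; push_cast; ring

/-- the duplication identity
`2·w_{AB}(2γ)·ρ(γ) = w_{AB}(γ)² + 2πi·Z_{AB}(2γ)`. -/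
theorem wAB_duplication (K : ℕ) (hK : 2 ≤ K) (A B : ℤ)
    (hAB : ¬(A % (K : ℤ) = 0 ∧ B % (K : ℤ) = 0)) (μ γ : ℂ) (hμ : 0 < μ.im)
    (h1 : thetaAB K 0 0 γ μ ≠ 0) (h2 : thetaAB K 0 0 (2 * γ) μ ≠ 0)
    (h3 : theta1 γ μ ≠ 0) (h4 : thetaAB K A B (2 * γ) μ ≠ 0)
    (h5 : thetaAB K A B 0 μ ≠ 0) :
    2 * wAB K A B (2 * γ) μ * rho γ μ
      = (wAB K A B γ μ)^2 + 2 * (Real.pi : ℂ) * Complex.I * ZAB K A B (2 * γ) μ := by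
  have hpi : (2 * (Real.pi : ℂ) * Complex.I) ≠ 0 := Complex.two_pi_I_ne_zero
  obtain ⟨C, a, u, hC, h⟩ := thetaAB_eq K A B μ
  have dT : ∀ z, HasDerivAt (auxT μ) (deriv (auxT μ) z) z := fun z => (auxT_diff μ hμ z).hasDerivAt
  have dE : ∀ z, deriv (fun z => thetaAB K A B z μ) z =
      C * Complex.exp (a * z) * (a * auxT μ (z+u) + deriv (auxT μ) (z+u)) := by
    intro z
    rw [funext h]
    have e1 : HasDerivAt (fun z : ℂ => C * Complex.exp (a * z)) (C * (Complex.exp (a * z) * a)) z := by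
      simpa using (((hasDerivAt_id z).const_mul a).cexp).const_mul C
    refine (e1.mul ((dT (z+u)).comp_add_const z u)).deriv.trans ?_
    ring
  have d1 : deriv (fun z => theta1 z μ) γ = - deriv (auxT μ) γ := by
    rw [funext (fun z => theta1_eq z μ)]; exact (dT γ).neg.deriv
  have d0 : (fun z => thetaAB K 0 0 z μ) = auxT μ := funext fun z => thetaAB_zero K z μ
  rw [thetaAB_zero] at h1 h2
  have key := aux_key μ hμ γ u h1
  unfold ZAB wAB rho
  rw [d1, d0, dE, dE, theta1_eq]
  simp only [thetaAB_zero, h] at h4 h5 ⊢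
  have k4 := right_ne_zero_of_mul h4
  have k5 := right_ne_zero_of_mul h5
  simp only [zero_add, mul_zero, Complex.exp_zero, mul_one] at k5 ⊢
  have hE : Complex.exp (a * (2 * γ)) = Complex.exp (a * γ)^2 := by
    rw [← Complex.exp_nat_mul]; congr 1; push_cast; ring
  rw [hE]
  have he := Complex.exp_ne_zero (a * γ)
  generalize Complex.exp (a * γ) = e at *
  generalize (2 * (Real.pi : ℂ) * Complex.I) = w at *
  generalize auxT μ (2 * γ + u) = t1 at *
  generalize auxT μ (2 * γ) = t2 at *
  generalize auxT μ (γ + u) = t3 at *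
  generalize auxT μ u = t4 at *
  generalize auxT μ γ = t5 at *
  generalize deriv (auxT μ) 0 = c at *
  generalize deriv (auxT μ) (2 * γ + u) = s1 at *
  generalize deriv (auxT μ) u = s4 at *
  generalize deriv (auxT μ) γ = s5 at *
  field_simp
  linear_combination (-c) * key
end
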